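/- For λ ∈ ℂ, let M(λ) be the symmetric 4×4 matrix of the complex quadratic form F_λ(u₀,u₁,u₂,u₃) = (1−λ)(4u₀² − 4u₀u₂ − 4u₁² − 3u₂²) + λ(4u₀² + 4u₀u₂ − 3u₂² − 4u₃²), namely M(λ) has rows (4, 0, 2(2λ−1), 0), (0, −4(1−λ), 0, 0), (2(2λ−1), 0, −3, 0), (0, 0, 0, −4λ). Then det M(λ) = −256·λ·(1−λ)·(λ²−λ+1); in particular, the quadratic form F_λ is degenerate (det M(λ) = 0) if and only if λ ∈ {0, 1, (1+i√3)/2, (1−i√3)/2}. (These four values of λ yield the degenerate quadrics of the tangential system, whose planes form the common self-polar tetrahedron.) -/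

import Mathlib

/-- The symmetric matrix of the tangential (plane-coordinate) quadratic form
`F_λ(u₀,u₁,u₂,u₃) = (1−λ)(4u₀² − 4u₀u₂ − 4u₁² − 3u₂²) + λ(4u₀² + 4u₀u₂ − 3u₂² − 4u₃²)`
of the system of quadrics inscribed in the extended oloid, for complex `λ`. -/
def M (l : ℂ) : Matrix (Fin 4) (Fin 4) ℂ :=
  !![4, 0, 2 * (2 * l - 1), 0;
     0, -4 * (1 - l), 0, 0;
     2 * (2 * l - 1), 0, -3, 0;
     0, 0, 0, -4 * l]

/-- `det M(λ) = −256·λ·(1−λ)·(λ²−λ+1)`; in particular the tangential form `F_λ` is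
degenerate exactly for `λ ∈ {0, 1, (1+i√3)/2, (1−i√3)/2}`. -/
theorem stmt_15 (l : ℂ) :
    (M l).det = -256 * l * (1 - l) * (l ^ 2 - l + 1) ∧
    ((M l).det = 0 ↔
      l = 0 ∨ l = 1 ∨ l = (1 + Complex.I * Real.sqrt 3) / 2 ∨
        l = (1 - Complex.I * Real.sqrt 3) / 2) := by
  have hdet : (M l).det = -256 * l * (1 - l) * (l ^ 2 - l + 1) := by
    simp [M, Matrix.det_succ_row_zero, Fin.sum_univ_succ, Fin.succAbove]
    ring
  refine ⟨hdet, ?_⟩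
  have h3 : ((Real.sqrt 3 : ℝ) : ℂ) ^ 2 = 3 := by
    rw [← Complex.ofReal_pow, Real.sq_sqrt (by norm_num)]
    norm_num
  have hf : l ^ 2 - l + 1 = (l - (1 + Complex.I * Real.sqrt 3) / 2) *
      (l - (1 - Complex.I * Real.sqrt 3) / 2) := by
    linear_combination (-1 / 4 : ℂ) * h3 + (1 / 4 : ℂ) * (Real.sqrt 3 : ℂ) ^ 2 * Complex.I_sq
  rw [hdet, hf]
  simp only [mul_eq_zero, sub_eq_zero, or_assoc, eq_comm (a := (1 : ℂ)) (b := l)]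
  norm_num
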